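/- Let $1<\alpha<\infty$ and $0<p<\infty$. For real $\varepsilon$, let $f_\varepsilon(z)=1+\varepsilon z$. Then as $\varepsilon\to 0$, $\|f_\varepsilon\|_{A_\alpha^p(\mathbb{D})}=1+\frac{p}{4\alpha}\varepsilon^2+O(\varepsilon^3)$; that is, the function $\varepsilon\mapsto \|1+\varepsilon z\|_{A_\alpha^p(\mathbb{D})}-1-\frac{p}{4\alpha}\varepsilon^2$ is $O(\varepsilon^3)$ as $\varepsilon\to 0$. -/

import Mathlib

open MeasureTheory Metric Asymptotics

/-- The weighted Bergman measure `dA_α(z) = (α-1)(1-|z|²)^(α-2) dA(z)` on the unit disk,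
where `dA = dx dy / π` is the normalized area measure. -/
noncomputable def bergmanMeasure (α : ℝ) : Measure ℂ :=
  ((volume : Measure ℂ).restrict (ball (0 : ℂ) 1)).withDensity
    fun z => ENNReal.ofReal ((α - 1) * (1 - ‖z‖ ^ 2) ^ (α - 2) / Real.pi)

theorem isBigO_one_add_rpow_sub_linear (a : ℝ) :
    (fun u : ℝ => (1 + u) ^ a - 1 - a * u) =O[nhds 0] fun u => u ^ 2 := by
  have h := (Real.one_add_rpow_hasFPowerSeriesAt_zero (a := a)).isBigO_sub_partialSum_pow 2
  refine (h.congr_left fun u => ?_).trans (isBigO_of_le _ fun u => by simp)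
  simp [-FormalMultilinearSeries.apply_eq_prod_smul_coeff, FormalMultilinearSeries.partialSum,
    Finset.sum_range_succ, sub_sub]

theorem isBigO_one_add_rpow_sub_quadratic (a : ℝ) :
    (fun u : ℝ => (1 + u) ^ a - 1 - a * u - a * (a - 1) / 2 * u ^ 2)
      =O[nhds 0] fun u => u ^ 3 := by
  have h := (Real.one_add_rpow_hasFPowerSeriesAt_zero (a := a)).isBigO_sub_partialSum_pow 3
  have hc : Ring.choose a 2 = a * (a - 1) / 2 := by
    rw [Ring.choose_eq_smul, ← Polynomial.aeval_eq_smeval]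
    simp [descPochhammer_succ_right]
    ring
  refine (h.congr_left fun u => ?_).trans (isBigO_of_le _ fun u => by simp)
  simp [-FormalMultilinearSeries.apply_eq_prod_smul_coeff, FormalMultilinearSeries.partialSum,
    Finset.sum_range_succ, sub_sub, hc]

theorem hasDerivAt_one_sub_sq_rpow {β : ℝ} (hβ : 0 < β) {r : ℝ} (hr : r ∈ Set.Ioo (0 : ℝ) 1) :
    HasDerivAt (fun r : ℝ => -(1 - r ^ 2) ^ β / (2 * β)) (r * (1 - r ^ 2) ^ (β - 1)) r := by
  have h1 : (0 : ℝ) < 1 - r ^ 2 := by nlinarith [hr.1, hr.2]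
  have h := ((((hasDerivAt_id r).pow 2).const_sub 1).rpow_const (p := β) (Or.inl h1.ne')).neg.div_const
    (2 * β)
  convert! h using 1
  simp
  field_simp

theorem continuous_one_sub_sq_rpow {β : ℝ} (hβ : 0 < β) :
    Continuous (fun r : ℝ => -(1 - r ^ 2) ^ β / (2 * β)) :=
  ((Continuous.rpow_const (by fun_prop) fun _ => Or.inr hβ.le).neg).div_const _

theorem intervalIntegrable_mul_one_sub_sq_rpow {β : ℝ} (hβ : 0 < β) :
    IntervalIntegrable (fun r : ℝ => r * (1 - r ^ 2) ^ (β - 1)) volume 0 1 := by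
  refine intervalIntegral.intervalIntegrable_deriv_of_nonneg
    (continuous_one_sub_sq_rpow hβ).continuousOn (fun r hr => ?_) fun r hr => ?_
  · exact hasDerivAt_one_sub_sq_rpow hβ (by simpa using hr)
  · simp only [zero_le_one, inf_of_le_left, sup_of_le_right, Set.mem_Ioo] at hr
    exact mul_nonneg hr.1.le (Real.rpow_nonneg (by nlinarith) _)

theorem integral_mul_one_sub_sq_rpow {β : ℝ} (hβ : 0 < β) :
    ∫ r in (0 : ℝ)..1, r * (1 - r ^ 2) ^ (β - 1) = 1 / (2 * β) := by
  rw [intervalIntegral.integral_eq_sub_of_hasDerivAt_of_le zero_le_one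
    (continuous_one_sub_sq_rpow hβ).continuousOn (fun r hr => hasDerivAt_one_sub_sq_rpow hβ hr)
    (intervalIntegrable_mul_one_sub_sq_rpow hβ)]
  simp [Real.zero_rpow hβ.ne']
  ring

/-- Integration of a radial function over the unit disk in polar coordinates. -/
theorem setIntegral_ball_fun_norm (g : ℝ → ℝ) :
    ∫ z in ball (0 : ℂ) 1, g ‖z‖ = 2 * Real.pi * ∫ r in (0 : ℝ)..1, r * g r := by
  have hi : ∀ z : ℂ, (ball (0 : ℂ) 1).indicator (fun z => g ‖z‖) z
      = (Set.Iio (1 : ℝ)).indicator g ‖z‖ := fun z => by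
    by_cases hz : ‖z‖ < 1 <;> simp [hz]
  rw [← integral_indicator measurableSet_ball, integral_congr_ae (.of_forall hi),
    integral_fun_norm_addHaar]
  have hr : ∀ r : ℝ, r • (Set.Iio (1 : ℝ)).indicator g r
      = (Set.Iio (1 : ℝ)).indicator (fun r => r * g r) r := fun r => by
    simp [Set.indicator_apply]
  simp only [Complex.finrank_real_complex, Nat.add_one_sub_one, pow_one, hr]
  rw [setIntegral_indicator measurableSet_Iio, Set.Ioi_inter_Iio,
    intervalIntegral.integral_of_le zero_le_one, integral_Ioc_eq_integral_Ioo]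
  simp [measureReal_def, mul_assoc]

theorem bergmanDensity_nonneg {α : ℝ} (hα : 1 < α) {z : ℂ} (hz : z ∈ ball (0 : ℂ) 1) :
    0 ≤ (α - 1) * (1 - ‖z‖ ^ 2) ^ (α - 2) / Real.pi := by
  have hz' : ‖z‖ < 1 := by simpa using hz
  have := Real.rpow_nonneg (show (0 : ℝ) ≤ 1 - ‖z‖ ^ 2 by nlinarith [norm_nonneg z]) (α - 2)
  have := sub_pos.2 hα
  positivity

theorem integral_bergmanMeasure {α : ℝ} (hα : 1 < α) (f : ℂ → ℝ) :
    ∫ z, f z ∂(bergmanMeasure α)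
      = ∫ z in ball (0 : ℂ) 1, (α - 1) * (1 - ‖z‖ ^ 2) ^ (α - 2) / Real.pi * f z := by
  rw [bergmanMeasure, integral_withDensity_eq_integral_toReal_smul (by fun_prop)
    (.of_forall fun _ => ENNReal.ofReal_lt_top)]
  refine setIntegral_congr_fun measurableSet_ball fun z hz => ?_
  simp [ENNReal.toReal_ofReal (bergmanDensity_nonneg hα hz)]

theorem integral_bergmanMeasure_fun_norm {α : ℝ} (hα : 1 < α) (g : ℝ → ℝ) :
    ∫ z, g ‖z‖ ∂(bergmanMeasure α)
      = 2 * (α - 1) * ∫ r in (0 : ℝ)..1, r * (1 - r ^ 2) ^ (α - 2) * g r := by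
  rw [integral_bergmanMeasure hα,
    setIntegral_ball_fun_norm fun r => (α - 1) * (1 - r ^ 2) ^ (α - 2) / Real.pi * g r]
  simp only [← intervalIntegral.integral_const_mul]
  congr! 2 with r
  field_simp

theorem integral_bergmanMeasure_comp_isometry {α : ℝ} (hα : 1 < α) (f : ℂ → ℝ)
    (L : ℂ ≃ₗᵢ[ℝ] ℂ) :
    ∫ z, f (L z) ∂(bergmanMeasure α) = ∫ z, f z ∂(bergmanMeasure α) := by
  have h := L.measurePreserving.setIntegral_preimage_emb
    L.toHomeomorph.measurableEmbedding
    (fun z => (α - 1) * (1 - ‖z‖ ^ 2) ^ (α - 2) / Real.pi * f z) (ball 0 1)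
  rw [LinearIsometryEquiv.preimage_ball] at h
  simpa [integral_bergmanMeasure hα] using h

theorem isProbabilityMeasure_bergmanMeasure {α : ℝ} (hα : 1 < α) :
    IsProbabilityMeasure (bergmanMeasure α) := by
  have h1 : ∫ z, (1 : ℝ) ∂(bergmanMeasure α) = 1 := by
    rw [integral_bergmanMeasure_fun_norm hα fun _ => 1]
    have := integral_mul_one_sub_sq_rpow (sub_pos.2 hα)
    rw [show α - 1 - 1 = α - 2 by ring] at this
    have h0 := (sub_pos.2 hα).ne'
    simp only [mul_one, this]
    field_simp
  refine ⟨?_⟩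
  simpa [measureReal_def, ENNReal.toReal_eq_one_iff] using h1

theorem ae_bergmanMeasure_norm_lt_one (α : ℝ) : ∀ᵐ z ∂(bergmanMeasure α), ‖z‖ < 1 := by
  refine (withDensity_absolutelyContinuous _ _).ae_le ?_
  filter_upwards [ae_restrict_mem measurableSet_ball] with z hz
  simpa using hz

theorem integral_bergmanMeasure_norm_sq {α : ℝ} (hα : 1 < α) :
    ∫ z, ‖z‖ ^ 2 ∂(bergmanMeasure α) = 1 / α := by
  have hα0 : 0 < α := by linarith
  have h1 := sub_pos.2 hα
  have e1 := integral_mul_one_sub_sq_rpow h1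
  have i1 := intervalIntegrable_mul_one_sub_sq_rpow h1
  rw [show α - 1 - 1 = α - 2 by ring] at e1 i1
  have : ∫ r in (0 : ℝ)..1, r * (1 - r ^ 2) ^ (α - 2) * r ^ 2
      = ∫ r in (0 : ℝ)..1, (r * (1 - r ^ 2) ^ (α - 2) - r * (1 - r ^ 2) ^ (α - 1)) := by
    rw [intervalIntegral.integral_of_le zero_le_one, intervalIntegral.integral_of_le zero_le_one,
      integral_Ioc_eq_integral_Ioo, integral_Ioc_eq_integral_Ioo]
    refine setIntegral_congr_fun measurableSet_Ioo fun r hr => ?_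
    have h0 : (0 : ℝ) < 1 - r ^ 2 := by nlinarith [hr.1, hr.2]
    rw [show α - 1 = α - 2 + 1 by ring, Real.rpow_add_one h0.ne']
    ring
  rw [integral_bergmanMeasure_fun_norm hα (· ^ 2), this, intervalIntegral.integral_sub i1
    (intervalIntegrable_mul_one_sub_sq_rpow hα0), e1, integral_mul_one_sub_sq_rpow hα0]
  field_simp
  ring

theorem integral_bergmanMeasure_re {α : ℝ} (hα : 1 < α) :
    ∫ z, z.re ∂(bergmanMeasure α) = 0 := by
  have h := integral_bergmanMeasure_comp_isometry hα Complex.re (.neg ℝ)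
  simp [integral_neg] at h
  linarith

theorem integrable_bergmanMeasure_of_norm_le {α : ℝ} (hα : 1 < α) {f : ℂ → ℝ} (hf : Continuous f)
    {C : ℝ} (hC : ∀ z, ‖z‖ < 1 → ‖f z‖ ≤ C) : Integrable f (bergmanMeasure α) := by
  have := isProbabilityMeasure_bergmanMeasure hα
  exact .of_bound hf.aestronglyMeasurable C
    ((ae_bergmanMeasure_norm_lt_one α).mono fun z hz => hC z hz)

theorem integrable_bergmanMeasure_re_sq {α : ℝ} (hα : 1 < α) :
    Integrable (fun z : ℂ => z.re ^ 2) (bergmanMeasure α) :=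
  integrable_bergmanMeasure_of_norm_le hα (by fun_prop) (C := 1) fun z hz => by
    have := Complex.abs_re_le_norm z
    rw [Real.norm_eq_abs, abs_pow]
    exact pow_le_one₀ (abs_nonneg _) (by linarith)

theorem integral_bergmanMeasure_re_sq {α : ℝ} (hα : 1 < α) :
    ∫ z, z.re ^ 2 ∂(bergmanMeasure α) = 1 / (2 * α) := by
  have h := integral_bergmanMeasure_comp_isometry hα (fun z => z.re ^ 2)
    (rotation (Circle.exp (Real.pi / 2)))
  have hs := integral_bergmanMeasure_norm_sq hα
  have hre := integrable_bergmanMeasure_re_sq hα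
  have him : Integrable (fun z : ℂ => z.im ^ 2) (bergmanMeasure α) :=
    integrable_bergmanMeasure_of_norm_le hα (by fun_prop) (C := 1) fun z hz => by
      have := Complex.abs_im_le_norm z
      rw [Real.norm_eq_abs, abs_pow]
      exact pow_le_one₀ (abs_nonneg _) (by linarith)
  have hn : ∀ z : ℂ, ‖z‖ ^ 2 = z.re ^ 2 + z.im ^ 2 := fun z => by
    rw [Complex.sq_norm, Complex.normSq_apply]; ring
  simp only [hn, integral_add hre him] at hs
  have hI : ∀ z : ℂ, (rotation (Circle.exp (Real.pi / 2)) z).re = -z.im := fun z => by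
    rw [rotation_apply, Circle.coe_exp]
    simp [Complex.exp_pi_div_two_mul_I]
  simp only [hI, neg_sq] at h
  have : 1 / (2 * α) = 1 / α / 2 := by ring
  linarith

theorem norm_one_add_mul_rpow (p ε : ℝ) (z : ℂ) :
    ‖(1 : ℂ) + (ε : ℂ) * z‖ ^ p = (1 + (2 * ε * z.re + ε ^ 2 * ‖z‖ ^ 2)) ^ (p / 2) := by
  have h : 1 + (2 * ε * z.re + ε ^ 2 * ‖z‖ ^ 2) = ‖(1 : ℂ) + (ε : ℂ) * z‖ ^ (2 : ℝ) := by
    rw [Real.rpow_two, Complex.sq_norm, Complex.sq_norm, Complex.normSq_apply,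
      Complex.normSq_apply]
    simp
    ring
  rw [h, ← Real.rpow_mul (norm_nonneg _)]
  congr 1
  ring

theorem exists_norm_one_add_mul_rpow_sub_le (p : ℝ) :
    ∃ K : ℝ, ∀ᶠ ε : ℝ in nhds 0, ∀ z : ℂ, ‖z‖ < 1 →
      ‖‖(1 : ℂ) + (ε : ℂ) * z‖ ^ p - (1 + p / 2 * (2 * ε * z.re + ε ^ 2 * ‖z‖ ^ 2)
        + p / 2 * (p / 2 - 1) * 2 * ε ^ 2 * z.re ^ 2)‖ ≤ K * |ε| ^ 3 := by
  obtain ⟨C, hC, h⟩ := (isBigO_one_add_rpow_sub_quadratic (p / 2)).exists_pos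
  obtain ⟨δ, hδ, h⟩ := Metric.eventually_nhds_iff.1 h.bound
  refine ⟨C * 27 + |p / 2 * (p / 2 - 1) / 2| * 5, ?_⟩
  refine Metric.eventually_nhds_iff.2 ⟨min 1 (δ / 3), by positivity, fun ε hε z hz => ?_⟩
  rw [Real.dist_eq, sub_zero, lt_min_iff] at hε
  rw [norm_one_add_mul_rpow]
  set u := 2 * ε * z.re + ε ^ 2 * ‖z‖ ^ 2 with hu
  have hx : |z.re| ≤ 1 := (Complex.abs_re_le_norm z).trans hz.le
  have hr : ‖z‖ ^ 2 ≤ 1 := pow_le_one₀ (norm_nonneg z) hz.le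
  have hr0 : 0 ≤ ‖z‖ ^ 2 := by positivity
  have hu3 : |u| ≤ 3 * |ε| := by
    calc |u| ≤ |2 * ε * z.re| + |ε ^ 2 * ‖z‖ ^ 2| := abs_add_le _ _
      _ = 2 * |ε| * |z.re| + |ε| * |ε| * ‖z‖ ^ 2 := by
        simp [abs_mul, sq]
      _ ≤ 2 * |ε| * 1 + |ε| * 1 * 1 := by
        gcongr
        exact hε.1.le
      _ = 3 * |ε| := by ring
  have hR := h (y := u) (by rw [Real.dist_eq, sub_zero]; linarith)
  have hsq : |u ^ 2 - 4 * ε ^ 2 * z.re ^ 2| ≤ 5 * |ε| ^ 3 := by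
    calc |u ^ 2 - 4 * ε ^ 2 * z.re ^ 2|
        = |ε| ^ 3 * |4 * z.re * ‖z‖ ^ 2 + ε * (‖z‖ ^ 2 * ‖z‖ ^ 2)| := by
          rw [← abs_pow, ← abs_mul, hu]
          ring_nf
      _ ≤ |ε| ^ 3 * (4 * |z.re| * ‖z‖ ^ 2 + |ε| * (‖z‖ ^ 2 * ‖z‖ ^ 2)) := by
          gcongr
          refine (abs_add_le _ _).trans_eq ?_
          simp [abs_mul]
      _ ≤ |ε| ^ 3 * (4 * 1 * 1 + 1 * (1 * 1)) := by
          gcongr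
          exact hε.1.le
      _ = 5 * |ε| ^ 3 := by ring
  calc _ = ‖((1 + u) ^ (p / 2) - 1 - p / 2 * u - p / 2 * (p / 2 - 1) / 2 * u ^ 2)
          + p / 2 * (p / 2 - 1) / 2 * (u ^ 2 - 4 * ε ^ 2 * z.re ^ 2)‖ := by
        congr 1
        ring
    _ ≤ C * |u| ^ 3 + |p / 2 * (p / 2 - 1) / 2| * |u ^ 2 - 4 * ε ^ 2 * z.re ^ 2| := by
        refine (norm_add_le _ _).trans (add_le_add (hR.trans_eq ?_) (norm_mul _ _).le)
        rw [norm_pow, Real.norm_eq_abs]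
    _ ≤ C * (3 * |ε|) ^ 3 + |p / 2 * (p / 2 - 1) / 2| * (5 * |ε| ^ 3) := by
        gcongr
    _ = _ := by ring

theorem isBigO_integral_norm_one_add_mul_rpow {α p : ℝ} (hα : 1 < α) (hp : 0 < p) :
    (fun ε : ℝ => ∫ z, ‖(1 : ℂ) + (ε : ℂ) * z‖ ^ p ∂(bergmanMeasure α)
      - 1 - p ^ 2 / (4 * α) * ε ^ 2) =O[nhds 0] fun ε : ℝ => ε ^ 3 := by
  have := isProbabilityMeasure_bergmanMeasure hα
  obtain ⟨K, hK⟩ := exists_norm_one_add_mul_rpow_sub_le p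
  refine .of_bound K (hK.mono fun ε hε => ?_)
  have hF : Integrable (fun z : ℂ => ‖(1 : ℂ) + (ε : ℂ) * z‖ ^ p) (bergmanMeasure α) := by
    refine integrable_bergmanMeasure_of_norm_le hα
      (Continuous.rpow_const (by fun_prop) fun _ => Or.inr hp.le) (C := (1 + |ε|) ^ p)
      fun z hz => ?_
    rw [Real.norm_of_nonneg (by positivity)]
    gcongr
    refine (norm_add_le _ _).trans ?_
    simp only [norm_one, norm_mul, Complex.norm_real, Real.norm_eq_abs]
    gcongr
    exact mul_le_of_le_one_right (abs_nonneg ε) hz.le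
  have hre : Integrable (fun z : ℂ => z.re) (bergmanMeasure α) :=
    integrable_bergmanMeasure_of_norm_le hα (by fun_prop) (C := 1) fun z hz =>
      (Complex.abs_re_le_norm z).trans hz.le
  have hn : Integrable (fun z : ℂ => ‖z‖ ^ 2) (bergmanMeasure α) :=
    integrable_bergmanMeasure_of_norm_le hα (by fun_prop) (C := 1) fun z hz => by
      rw [norm_pow, norm_norm]
      exact pow_le_one₀ (norm_nonneg z) hz.le
  have hre2 := integrable_bergmanMeasure_re_sq hα
  have hlin : Integrable (fun z : ℂ => 2 * ε * z.re + ε ^ 2 * ‖z‖ ^ 2) (bergmanMeasure α) :=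
    (hre.const_mul _).add (hn.const_mul _)
  have hone : Integrable (fun z : ℂ => 1 + p / 2 * (2 * ε * z.re + ε ^ 2 * ‖z‖ ^ 2))
      (bergmanMeasure α) := (integrable_const _).add (hlin.const_mul _)
  have hquad : Integrable (fun z : ℂ => 1 + p / 2 * (2 * ε * z.re + ε ^ 2 * ‖z‖ ^ 2)
      + p / 2 * (p / 2 - 1) * 2 * ε ^ 2 * z.re ^ 2) (bergmanMeasure α) :=
    hone.add (hre2.const_mul _)
  have hα0 : α ≠ 0 := by linarith
  have hP : ∫ z : ℂ, (1 + p / 2 * (2 * ε * z.re + ε ^ 2 * ‖z‖ ^ 2)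
        + p / 2 * (p / 2 - 1) * 2 * ε ^ 2 * z.re ^ 2) ∂(bergmanMeasure α)
      = 1 + p ^ 2 / (4 * α) * ε ^ 2 := by
    rw [integral_add hone (hre2.const_mul _), integral_add (integrable_const _)
      (hlin.const_mul _), integral_const_mul, integral_add (hre.const_mul _) (hn.const_mul _),
      integral_const_mul, integral_const_mul, integral_const_mul, integral_bergmanMeasure_re hα,
      integral_bergmanMeasure_norm_sq hα, integral_bergmanMeasure_re_sq hα]
    simp
    field_simp
    ring
  rw [sub_sub, ← hP, ← integral_sub hF hquad, norm_pow,
    Real.norm_eq_abs ε]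
  simpa using norm_integral_le_of_norm_le_const
    ((ae_bergmanMeasure_norm_lt_one α).mono fun z hz => hε z hz)

/-- Lemma 2.1: for `f_ε(z) = 1 + εz`, one has
`‖f_ε‖_{A_α^p} = 1 + (p/(4α)) ε² + O(ε³)` as `ε → 0`. -/
theorem norm_one_add_eps_expansion
    (α p : ℝ) (hα : 1 < α) (hp : 0 < p) :
    (fun ε : ℝ =>
        (∫ z, ‖(1 : ℂ) + (ε : ℂ) * z‖ ^ p ∂(bergmanMeasure α)) ^ (1 / p)
          - 1 - p / (4 * α) * ε ^ 2)
      =O[nhds 0] fun ε : ℝ => ε ^ 3 := by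
  have hI := isBigO_integral_norm_one_add_mul_rpow hα hp
  set I : ℝ → ℝ := fun ε => ∫ z, ‖(1 : ℂ) + (ε : ℂ) * z‖ ^ p ∂(bergmanMeasure α)
  have h32 : (fun ε : ℝ => ε ^ 3) =O[nhds 0] fun ε : ℝ => ε ^ 2 :=
    (isLittleO_pow_pow (by norm_num)).isBigO
  have h43 : (fun ε : ℝ => ε ^ 4) =O[nhds 0] fun ε : ℝ => ε ^ 3 :=
    (isLittleO_pow_pow (by norm_num)).isBigO
  have hv : (fun ε => I ε - 1) =O[nhds 0] fun ε : ℝ => ε ^ 2 :=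
    ((hI.trans h32).add (isBigO_const_mul_self (p ^ 2 / (4 * α)) (fun ε : ℝ => ε ^ 2) _)).congr_left
      fun ε => by ring
  have hv0 : Filter.Tendsto (fun ε => I ε - 1) (nhds 0) (nhds 0) :=
    hv.trans_tendsto (Continuous.tendsto' (by fun_prop) _ _ (by simp))
  have hrem := ((isBigO_one_add_rpow_sub_linear (1 / p)).comp_tendsto hv0).trans
    (hv.pow 2 |>.congr_right fun ε => (pow_mul ε 2 2).symm)
  refine ((hrem.trans h43).add (hI.const_mul_left (1 / p))).congr_left fun ε => ?_
  simp only [Function.comp_apply, add_sub_cancel]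
  field_simp
  ring
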